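/- Let 0 < γ < 2. For ε > 0 define λ̄^ε_γ(F) := sup{μ ∈ ℝ : there exists u continuous on [0,1), C² on (0,1), with u > 0 on [0,1) and F(D(u''(r), u'(r)/r)) + μ·u(r)·(r²+ε²)^{−γ/2} ≤ 0 for all r ∈ (0,1)}, and for δ ∈ (0,1) define λ̄_{γ,δ}(F) := sup{μ ∈ ℝ : there exists a C² function u : (δ,1) → ℝ with u > 0 on (δ,1) and F(D(u''(r), u'(r)/r)) + μ·u(r)·r^{−γ} ≤ 0 for all r ∈ (δ,1)}. Then λ̄'_γ(F) = lim_{ε→0⁺} λ̄^ε_γ(F) and λ̄'_γ(F) = lim_{δ→0⁺} λ̄_{γ,δ}(F). -/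

import Mathlib

open Set Real Filter MeasureTheory Matrix

noncomputable section

/-- The `N × N` diagonal matrix with first diagonal entry `a` and the remaining
`N - 1` diagonal entries equal to `b`. -/
def Dmat (N : ℕ) (a b : ℝ) : Matrix (Fin N) (Fin N) ℝ :=
  Matrix.diagonal (fun i => if (i : ℕ) = 0 then a else b)

/-- Uniform ellipticity with constants `0 < lam ≤ Lam`. -/
def UnifElliptic (N : ℕ) (lam Lam : ℝ) (F : Matrix (Fin N) (Fin N) ℝ → ℝ) : Prop :=
  ∀ M P : Matrix (Fin N) (Fin N) ℝ, M.IsSymm → P.PosSemidef →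
    lam * P.trace ≤ F (M + P) - F M ∧ F (M + P) - F M ≤ Lam * P.trace

/-- Rotation invariance. -/
def RotInvariant (N : ℕ) (F : Matrix (Fin N) (Fin N) ℝ → ℝ) : Prop :=
  ∀ O M : Matrix (Fin N) (Fin N) ℝ, Oᵀ * O = 1 → F (Oᵀ * M * O) = F M

/-- Positive one-homogeneity. -/
def PosHomog (N : ℕ) (F : Matrix (Fin N) (Fin N) ℝ → ℝ) : Prop :=
  ∀ t : ℝ, 0 < t → ∀ M : Matrix (Fin N) (Fin N) ℝ, F (t • M) = t * F M

/-- The radial principal eigenvalue `λ̄'_γ(F)` on the punctured unit ball. -/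
def radialEV (N : ℕ) (F : Matrix (Fin N) (Fin N) ℝ → ℝ) (γ : ℝ) : ℝ :=
  sSup {μ : ℝ | ∃ u : ℝ → ℝ, ContDiffOn ℝ 2 u (Ioo 0 1) ∧
    (∀ r ∈ Ioo (0:ℝ) 1, 0 < u r) ∧
    (∀ r ∈ Ioo (0:ℝ) 1,
      F (Dmat N (deriv (deriv u) r) (deriv u r / r)) + μ * u r * r ^ (-γ) ≤ 0)}


/-- The regularized eigenvalue `λ̄^ε_γ(F)`, where the singular potential `r^{-γ}` is
replaced by `(r² + ε²)^{-γ/2}`. -/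
def epsEV (N : ℕ) (F : Matrix (Fin N) (Fin N) ℝ → ℝ) (γ ε : ℝ) : ℝ :=
  sSup {μ : ℝ | ∃ u : ℝ → ℝ, ContinuousOn u (Ico 0 1) ∧ ContDiffOn ℝ 2 u (Ioo 0 1) ∧
    (∀ r ∈ Ico (0:ℝ) 1, 0 < u r) ∧
    (∀ r ∈ Ioo (0:ℝ) 1,
      F (Dmat N (deriv (deriv u) r) (deriv u r / r))
        + μ * u r * (r ^ 2 + ε ^ 2) ^ (-(γ / 2)) ≤ 0)}

/-- The eigenvalue `λ̄_{γ,δ}(F)` on the annulus `δ < r < 1`. -/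
def deltaEV (N : ℕ) (F : Matrix (Fin N) (Fin N) ℝ → ℝ) (γ δ : ℝ) : ℝ :=
  sSup {μ : ℝ | ∃ u : ℝ → ℝ, ContDiffOn ℝ 2 u (Ioo δ 1) ∧
    (∀ r ∈ Ioo δ 1, 0 < u r) ∧
    (∀ r ∈ Ioo δ 1,
      F (Dmat N (deriv (deriv u) r) (deriv u r / r)) + μ * u r * r ^ (-γ) ≤ 0)}

/-! If `u` is a positive supersolution, then `q = u' / u` satisfies a Riccati inequality, in which
`u'' / u = q' + q²`. Let `μ` be admissible on all annuli `δ < r < 1`. Near the origin the function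
`exp (-A r ^ (2 - γ) / (2 - γ))` is a supersolution for a slightly smaller `μ'`. Its logarithmic
derivative `-A r ^ (1 - γ)` cannot stay below that of a supersolution for `μ` on a long annulus
`δ < r < ρ`: because `Ñ₊ ≥ 2`, the difference `z` would make `r z` satisfy a Riccati inequality in
the variable `log r`, which forces blow-up within bounded logarithmic distance. So it lies above the
other one at some point, and there the two can be joined smoothly, just as the minimum of two
supersolutions is one again. The result is a supersolution for `μ'` on the whole punctured ball,
continuous and positive at the origin. Hence the eigenvalues of the annuli cannot stay above that of
the punctured ball, and the latter is not changed by requiring continuity at the origin; the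
regularized eigenvalues are then squeezed by comparing `r² + ε²` with `r²`. -/

/-! ### Differential inequalities -/

lemma antitoneOn_of_hasDerivAt_nonpos {s : Set ℝ} (hs : Convex ℝ s) {f f' : ℝ → ℝ}
    (hf : ∀ x ∈ s, HasDerivAt f (f' x) x) (hf' : ∀ x ∈ s, f' x ≤ 0) : AntitoneOn f s :=
  antitoneOn_of_hasDerivWithinAt_nonpos hs (HasDerivAt.continuousOn hf)
    (fun x hx => (hf x (interior_subset hx)).hasDerivWithinAt)
    (fun x hx => hf' x (interior_subset hx))

lemma mul_sub_lt_two_pi_of_hasDerivAt_le {q q' : ℝ → ℝ} {a b k : ℝ} (hk : 0 < k) (hab : a ≤ b)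
    (hq : ∀ x ∈ Icc a b, HasDerivAt q (q' x) x)
    (hq' : ∀ x ∈ Icc a b, q' x ≤ -((q x ^ 2 + k ^ 2) / 2)) : k * (b - a) < 2 * π := by
  have hanti : AntitoneOn (fun x => arctan (q x / k) + k / 2 * x) (Icc a b) := by
    refine antitoneOn_of_hasDerivAt_nonpos (convex_Icc a b)
      (fun x hx => ((hq x hx).div_const k).arctan.add ((hasDerivAt_id x).const_mul (k / 2)))
      fun x hx => ?_
    have hdiv : q' x / k / (1 + (q x / k) ^ 2) ≤ -(k / 2) := by
      rw [div_le_iff₀ (by positivity), div_le_iff₀ hk]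
      refine (hq' x hx).trans_eq ?_
      field_simp
      ring
    rw [one_div_mul_eq_div, mul_one]
    linarith
  have hle := hanti (left_mem_Icc.2 hab) (right_mem_Icc.2 hab) hab
  have hlt := arctan_lt_pi_div_two (q a / k)
  have hgt := neg_pi_div_two_lt_arctan (q b / k)
  dsimp only at hle
  linarith

lemma log_div_lt_two_div_of_hasDerivAt_le {y y' : ℝ → ℝ} {a b : ℝ} (ha : 0 < a) (hab : a ≤ b)
    (hy : ∀ x ∈ Icc a b, HasDerivAt y (y' x) x)
    (hy' : ∀ x ∈ Icc a b, y' x ≤ -(y x ^ 2 / (2 * x))) (hb : 0 < y b) :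
    log (b / a) < 2 / y b := by
  have hpos : ∀ x ∈ Icc a b, 0 < x := fun x hx => ha.trans_le hx.1
  have hmono : AntitoneOn y (Icc a b) := by
    refine antitoneOn_of_hasDerivAt_nonpos (convex_Icc a b) hy fun x hx => (hy' x hx).trans ?_
    have := hpos x hx
    exact neg_nonpos.2 (by positivity)
  have hy0 : ∀ x ∈ Icc a b, 0 < y x := fun x hx =>
    hb.trans_le (hmono hx (right_mem_Icc.2 hab) hx.2)
  have hanti : AntitoneOn (fun x => log x / 2 - (y x)⁻¹) (Icc a b) := by
    refine antitoneOn_of_hasDerivAt_nonpos (convex_Icc a b)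
      (fun x hx => ((hasDerivAt_log (hpos x hx).ne').div_const 2).sub
        ((hy x hx).inv (hy0 x hx).ne')) fun x hx => ?_
    have := hpos x hx
    have := hy0 x hx
    rw [sub_nonpos, le_div_iff₀ (by positivity)]
    calc x⁻¹ / 2 * y x ^ 2 = y x ^ 2 / (2 * x) := by field_simp
      _ ≤ -y' x := le_neg_of_le_neg (hy' x hx)
  have hle := hanti (left_mem_Icc.2 hab) (right_mem_Icc.2 hab) hab
  have hinv := inv_pos.2 (hy0 a (left_mem_Icc.2 hab))
  rw [log_div (ha.trans_le hab).ne' ha.ne', div_eq_mul_inv]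
  dsimp only at hle
  linarith

-- In the variable `log r` the inequality reads `y' ≤ -y² / 2`, up to a forcing term which makes
-- `y` positive at `ρ / 4`; so `y` blows up within logarithmic distance `2 / y (ρ / 4)` below.
lemma exists_forall_hasDerivAt_le_exists_neg {κ α ρ : ℝ} (hκ : 0 < κ) (hα : 0 < α) (hρ : 0 < ρ) :
    ∃ δ ∈ Ioo 0 ρ, ∀ y y' : ℝ → ℝ, (∀ r ∈ Ioo δ ρ, HasDerivAt y (y' r) r) →
      (∀ r ∈ Ioo δ ρ, y' r ≤ -(y r ^ 2 / (2 * r)) - κ * r ^ (α - 1)) → ∃ r ∈ Ioo δ ρ, y r < 0 := by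
  set k := κ / α * ((ρ / 2) ^ α - (ρ / 4) ^ α)
  have hk : 0 < k :=
    mul_pos (by positivity) (sub_pos.2 (rpow_lt_rpow (by positivity) (by linarith) hα))
  set x := ρ / 4 * exp (-(2 / k))
  have hx : 0 < x := by positivity
  have hxρ : x ≤ ρ / 4 :=
    mul_le_of_le_one_right (by positivity) (exp_le_one_iff.2 (neg_nonpos.2 (by positivity)))
  refine ⟨x / 2, ⟨by positivity, by linarith⟩, fun y y' hy hy' => ?_⟩
  by_contra! hy0
  have hpos : ∀ r ∈ Ioo (x / 2) ρ, 0 < r := fun r hr => (half_pos hx).trans hr.1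
  have hmem₂ : ρ / 2 ∈ Ioo (x / 2) ρ := ⟨by linarith, by linarith⟩
  have hmem₄ : ρ / 4 ∈ Ioo (x / 2) ρ := ⟨by linarith, by linarith⟩
  have hky : k ≤ y (ρ / 4) := by
    have hanti : AntitoneOn (fun r => y r + κ / α * r ^ α) (Ioo (x / 2) ρ) := by
      refine antitoneOn_of_hasDerivAt_nonpos (convex_Ioo _ _)
        (fun r hr => (hy r hr).add
          ((hasDerivAt_rpow_const (.inl (hpos r hr).ne')).const_mul (κ / α))) fun r hr => ?_
      have := hpos r hr
      have hsq : 0 ≤ y r ^ 2 / (2 * r) := by positivity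
      have hforce : κ / α * (α * r ^ (α - 1)) = κ * r ^ (α - 1) := by field_simp
      linarith [hy' r hr]
    have hle := hanti hmem₄ hmem₂ (by linarith)
    simp only [k, mul_sub]
    linarith [hy0 _ hmem₂]
  have hsub : Icc x (ρ / 4) ⊆ Ioo (x / 2) ρ := fun r hr => ⟨by linarith [hr.1], by linarith [hr.2]⟩
  have hlog : log (ρ / 4 / x) = 2 / k := by
    rw [← div_div, div_self (by positivity), one_div, ← exp_neg, neg_neg, log_exp]
  have hlt : log (ρ / 4 / x) < 2 / y (ρ / 4) := by
    refine log_div_lt_two_div_of_hasDerivAt_le hx hxρ (fun r hr => hy r (hsub hr))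
      (fun r hr => (hy' r (hsub hr)).trans (sub_le_self _ ?_)) (hk.trans_le hky)
    have := hpos r (hsub hr)
    positivity
  exact (hlog ▸ hlt).not_ge (by gcongr)

lemma smoothTransition_mul_one_sub_le_deriv (t : ℝ) :
    smoothTransition t * (1 - smoothTransition t) ≤ deriv smoothTransition t := by
  have hexp : ∀ x, HasDerivAt expNegInvGlue ((x ^ 2)⁻¹ * expNegInvGlue x) x := fun x => by
    simpa using expNegInvGlue.hasDerivAt_polynomial_eval_inv_mul 1 x
  have hden := smoothTransition.pos_denom t
  have hexp' : HasDerivAt (fun x => expNegInvGlue (1 - x))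
      (((1 - t) ^ 2)⁻¹ * expNegInvGlue (1 - t) * (-1)) t :=
    (hexp (1 - t)).comp t ((hasDerivAt_id t).const_sub 1)
  have hderiv : deriv smoothTransition t = _ :=
    ((hexp t).div ((hexp t).add hexp') hden.ne').deriv
  rcases le_or_gt t 0 with h0 | h0
  · rw [smoothTransition.zero_of_nonpos h0, zero_mul]
    exact smoothTransition.monotone.deriv_nonneg
  rcases le_or_gt 1 t with h1 | h1
  · rw [smoothTransition.one_of_one_le h1, sub_self, mul_zero]
    exact smoothTransition.monotone.deriv_nonneg
  rw [hderiv]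
  simp only [smoothTransition, Pi.add_apply]
  have hinv : 1 ≤ (t ^ 2)⁻¹ := (one_le_inv₀ (by positivity)).2 (pow_le_one₀ h0.le h1.le)
  have hinv' : 0 ≤ ((1 - t) ^ 2)⁻¹ := by positivity
  have hf := expNegInvGlue.nonneg t
  have hg := expNegInvGlue.nonneg (1 - t)
  generalize expNegInvGlue t = f at *
  generalize expNegInvGlue (1 - t) = g at *
  calc f / (f + g) * (1 - f / (f + g)) = f * g / (f + g) ^ 2 := by field_simp; ring
    _ ≤ _ := by
      gcongr
      nlinarith [mul_nonneg hf hg, mul_nonneg (mul_nonneg hf hg) hinv']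

lemma smoothTransition_div_mul_one_sub_le (s : ℝ) {η : ℝ} (hη : 0 < η) (r : ℝ) :
    smoothTransition ((r - s) / η) * (1 - smoothTransition ((r - s) / η))
      ≤ η * deriv (fun r => smoothTransition ((r - s) / η)) r := by
  have hderiv : deriv (fun r => smoothTransition ((r - s) / η)) r
      = deriv smoothTransition ((r - s) / η) * (1 / η) :=
    ((smoothTransition.contDiffAt.differentiableAt one_ne_zero).hasDerivAt.comp r
      (((hasDerivAt_id r).sub_const s).div_const η)).deriv
  rw [hderiv, mul_one_div, mul_div_cancel₀ _ hη.ne']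
  exact smoothTransition_mul_one_sub_le_deriv _

lemma exists_hasDerivAt_of_eqOn_Iic {p q W : ℝ → ℝ} {a b s : ℝ} (hs : s ∈ Ioo a b)
    (hp : ContinuousOn p (Ioo a b)) (hq : ContinuousOn q (Ioo a b)) (hpq : EqOn p q (Iic s))
    (hWc : ContinuousOn W (Ico a b)) (hW : ∀ r ∈ Ioo a b, HasDerivAt W (q r) r) :
    ∃ w, ContinuousOn w (Ico a b) ∧ ∀ r ∈ Ioo a b, HasDerivAt w (p r) r := by
  -- Freezing `p - q` below `s`, where it vanishes, makes it continuous on the whole half-line.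
  set g : ℝ → ℝ := fun r => p (max r s) - q (max r s)
  have hmax : MapsTo (fun r => max r s) (Iio b) (Ioo a b) := fun r hr =>
    ⟨hs.1.trans_le (le_max_right r s), max_lt hr hs.2⟩
  have hg : ContinuousOn g (Iio b) :=
    (hp.sub hq).comp (continuous_id.max continuous_const).continuousOn hmax
  have hgp : ∀ r, p r = q r + g r := fun r => by
    rcases le_total r s with h | h
    · simp only [g, max_eq_right h, hpq h, hpq self_mem_Iic, sub_self, add_zero]
    · simp only [g, max_eq_left h, add_sub_cancel]
  have hint : ∀ r < b, HasDerivAt (fun r => ∫ x in s..r, g x) (g r) r := fun r hr =>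
    intervalIntegral.integral_hasDerivAt_right
      (hg.mono fun x hx => hx.2.trans_lt (max_lt hs.2 hr)).intervalIntegrable
      (hg.stronglyMeasurableAtFilter isOpen_Iio r hr) (hg.continuousAt (Iio_mem_nhds hr))
  refine ⟨fun r => W r + ∫ x in s..r, g x, ?_, fun r hr => ?_⟩
  · exact hWc.add fun r hr => (hint r hr.2).continuousAt.continuousWithinAt
  · rw [hgp]
    exact (hW r hr).add (hint r hr.2)

/-! ### Elliptic operators in `u''` and `u' / r` -/

/-- Uniform ellipticity and positive homogeneity of an operator `G (u'') (u' / r)` on radial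
functions, with ellipticity constants `l ≤ L` in the radial direction and `l' ≤ L'` for all angular
directions together. The dimension enters only through these constants: the condition `Ñ₊ ≥ 2`
becomes `L ≤ l'`. -/
structure RadialElliptic (G : ℝ → ℝ → ℝ) (l L l' L' : ℝ) : Prop where
  pos : 0 < l
  nonneg : 0 ≤ l'
  sub_mem_left : ∀ {a a' : ℝ} (b : ℝ), a ≤ a' → G a' b - G a b ∈ Icc (l * (a' - a)) (L * (a' - a))
  sub_mem_right : ∀ (a : ℝ) {b b' : ℝ}, b ≤ b' →
    G a b' - G a b ∈ Icc (l' * (b' - b)) (L' * (b' - b))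
  map_mul : ∀ {t : ℝ} (a b : ℝ), 0 < t → G (t * a) (t * b) = t * G a b

namespace RadialElliptic

variable {G : ℝ → ℝ → ℝ} {l L l' L' : ℝ}

lemma map_zero (hG : RadialElliptic G l L l' L') : G 0 0 = 0 := by
  have h := hG.map_mul 0 0 two_pos
  rw [mul_zero] at h
  linarith

lemma upper_pos (hG : RadialElliptic G l L l' L') : 0 < L := by
  have h := hG.sub_mem_left 0 zero_le_one
  linarith [h.1, h.2, hG.pos]

lemma upper_nonneg (hG : RadialElliptic G l L l' L') : 0 ≤ L' := by
  have h := hG.sub_mem_right 0 zero_le_one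
  linarith [h.1, h.2, hG.nonneg]

lemma strictMono_left (hG : RadialElliptic G l L l' L') (b : ℝ) : StrictMono (G · b) :=
  fun _ _ h => sub_pos.1 <| (mul_pos hG.pos (sub_pos.2 h)).trans_le (hG.sub_mem_left b h.le).1

lemma monotone_right (hG : RadialElliptic G l L l' L') (a : ℝ) : Monotone (G a) :=
  fun _ _ h => sub_nonneg.1 <|
    (mul_nonneg hG.nonneg (sub_nonneg.2 h)).trans (hG.sub_mem_right a h).1

lemma le_add_abs (hG : RadialElliptic G l L l' L') (a b a' b' : ℝ) :
    G a b ≤ G a' b' + (L * |a - a'| + L' * |b - b'|) := by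
  have hleft : G a b ≤ G a' b + L * |a - a'| := by
    rcases le_total a' a with h | h
    · rw [abs_of_nonneg (sub_nonneg.2 h)]
      linarith [(hG.sub_mem_left b h).2]
    · linarith [(hG.strictMono_left b).monotone h, mul_nonneg hG.upper_pos.le (abs_nonneg (a - a'))]
  have hright : G a' b ≤ G a' b' + L' * |b - b'| := by
    rcases le_total b' b with h | h
    · rw [abs_of_nonneg (sub_nonneg.2 h)]
      linarith [(hG.sub_mem_right a' h).2]
    · linarith [hG.monotone_right a' h, mul_nonneg hG.upper_nonneg (abs_nonneg (b - b'))]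
  linarith

lemma le_sub_of_apply_le (hG : RadialElliptic G l L l' L') {a a' b t : ℝ} (ht : 0 ≤ t)
    (h : G a b ≤ G a' b - L * t) : a ≤ a' - t := by
  have hshift := (hG.sub_mem_left b (sub_le_self a' ht)).2
  rw [sub_sub_cancel] at hshift
  exact (hG.strictMono_left b).le_iff_le.1 (by linarith)

lemma apply_convexCombo_le (hG : RadialElliptic G l L l' L') {t : ℝ} (ht₀ : 0 ≤ t) (ht₁ : t ≤ 1)
    (a b a' b' : ℝ) :
    G (a + t * (a' - a)) (b + t * (b' - b)) ≤ (1 - t) * G a b + t * G a' b'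
      + 2 * (t * (1 - t)) * (L * |a' - a| + L' * |b' - b|) := by
  have ht₁' : 0 ≤ 1 - t := sub_nonneg.2 ht₁
  have h := hG.le_add_abs (a + t * (a' - a)) (b + t * (b' - b)) a b
  have h' := hG.le_add_abs (a + t * (a' - a)) (b + t * (b' - b)) a' b'
  have hsub : ∀ x x' : ℝ, |x + t * (x' - x) - x| = t * |x' - x| := fun x x' => by
    rw [add_sub_cancel_left, abs_mul, abs_of_nonneg ht₀]
  have hsub' : ∀ x x' : ℝ, |x + t * (x' - x) - x'| = (1 - t) * |x' - x| := fun x x' => by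
    rw [show x + t * (x' - x) - x' = (1 - t) * (x - x') by ring, abs_mul, abs_of_nonneg ht₁',
      abs_sub_comm]
  rw [hsub, hsub] at h
  rw [hsub', hsub'] at h'
  linarith [mul_le_mul_of_nonneg_left h ht₁', mul_le_mul_of_nonneg_left h' ht₀]

lemma apply_sub_one_neg_one_neg (hG : RadialElliptic G l L l' L') (hL : L ≤ l') {γ : ℝ}
    (hγ : γ < 2) : G (γ - 1) (-1) < 0 := by
  have hradial : G (γ - 1) 0 < L := by
    have h := hG.le_add_abs (max (γ - 1) 0) 0 0 0
    rw [hG.map_zero, sub_zero, sub_zero, abs_zero, abs_of_nonneg (le_max_right _ _)] at h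
    have hmax : L * max (γ - 1) 0 < L * 1 :=
      mul_lt_mul_of_pos_left (max_lt (by linarith) one_pos) hG.upper_pos
    linarith [(hG.strictMono_left 0).monotone (le_max_left (γ - 1) 0)]
  have hangular := (hG.sub_mem_right (γ - 1) (neg_one_lt_zero (R := ℝ)).le).1
  linarith

end RadialElliptic

/-! ### Positive supersolutions and the Riccati inequality -/

/-- `u` is a positive `C²` supersolution on `s` of the radial eigenvalue equation
`G(u'', u' / r) + μ u V = 0` with potential `V`. -/
def IsPosSupersolution (G : ℝ → ℝ → ℝ) (V : ℝ → ℝ) (μ : ℝ) (s : Set ℝ) (u : ℝ → ℝ) : Prop :=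
  ContDiffOn ℝ 2 u s ∧ (∀ r ∈ s, 0 < u r) ∧
    ∀ r ∈ s, G (deriv (deriv u) r) (deriv u r / r) + μ * u r * V r ≤ 0

/-- The set of `μ` admitting a positive supersolution on `s`; the principal eigenvalue is its
supremum. -/
def admissible (G : ℝ → ℝ → ℝ) (V : ℝ → ℝ) (s : Set ℝ) : Set ℝ :=
  {μ | ∃ u, IsPosSupersolution G V μ s u}

/-- The inequality at `r` satisfied by the logarithmic derivative `q = u' / u` of a positive
supersolution, since `u'' / u = q' + q²`. The number `M` stands for `μ V(r)`. -/
def RiccatiAt (G : ℝ → ℝ → ℝ) (M : ℝ) (q : ℝ → ℝ) (r : ℝ) : Prop :=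
  ContDiffAt ℝ 1 q r ∧ G (deriv q r + q r ^ 2) (q r / r) ≤ -M

section Supersolution

variable {G : ℝ → ℝ → ℝ} {V V' u q q' w : ℝ → ℝ} {μ μ' M M' r l L l' L' : ℝ} {s t : Set ℝ}

lemma IsPosSupersolution.mono (h : IsPosSupersolution G V μ t u) (hst : s ⊆ t) :
    IsPosSupersolution G V μ s u :=
  ⟨h.1.mono hst, fun r hr => h.2.1 r (hst hr), fun r hr => h.2.2 r (hst hr)⟩

lemma IsPosSupersolution.of_potential_le (h : IsPosSupersolution G V μ s u)
    (hV : ∀ r ∈ s, μ' * V' r ≤ μ * V r) : IsPosSupersolution G V' μ' s u :=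
  ⟨h.1, h.2.1, fun r hr => by
    linarith [h.2.2 r hr, mul_le_mul_of_nonneg_left (hV r hr) (h.2.1 r hr).le]⟩

lemma admissible_subset_of_subset (hst : s ⊆ t) : admissible G V t ⊆ admissible G V s :=
  fun _ ⟨u, hu⟩ => ⟨u, hu.mono hst⟩

lemma mem_admissible_of_le (hV : ∀ r ∈ s, 0 ≤ V r) (hμ : μ ∈ admissible G V s) (hle : μ' ≤ μ) :
    μ' ∈ admissible G V s :=
  let ⟨u, hu⟩ := hμ
  ⟨u, hu.of_potential_le fun r hr => mul_le_mul_of_nonneg_right hle (hV r hr)⟩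

lemma RadialElliptic.isPosSupersolution_one (hG : RadialElliptic G l L l' L') :
    IsPosSupersolution G V 0 s 1 :=
  ⟨contDiffOn_const, fun _ _ => one_pos, fun r _ => by
    simp [Pi.one_def, hG.map_zero]⟩

lemma RadialElliptic.zero_mem_admissible (hG : RadialElliptic G l L l' L') :
    0 ∈ admissible G V s :=
  ⟨1, hG.isPosSupersolution_one⟩

lemma RiccatiAt.hasDerivAt (h : RiccatiAt G M q r) : HasDerivAt q (deriv q r) r :=
  (h.1.differentiableAt one_ne_zero).hasDerivAt

lemma RiccatiAt.continuousAt_deriv (h : RiccatiAt G M q r) : ContinuousAt (deriv q) r :=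
  (h.1.continuousAt_fderiv one_ne_zero).clm_apply continuousAt_const

lemma RiccatiAt.of_le (h : RiccatiAt G M q r) (hM : M' ≤ M) : RiccatiAt G M' q r :=
  ⟨h.1, h.2.trans (neg_le_neg hM)⟩

lemma RiccatiAt.congr (h : RiccatiAt G M q r) (hq : q' =ᶠ[nhds r] q) : RiccatiAt G M q' r :=
  ⟨h.1.congr_of_eventuallyEq hq, by rw [hq.deriv_eq, hq.eq_of_nhds]; exact h.2⟩

lemma RadialElliptic.riccatiAt_logDeriv (hG : RadialElliptic G l L l' L') (hs : IsOpen s)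
    (hu : IsPosSupersolution G V μ s u) (hr : r ∈ s) : RiccatiAt G (μ * V r) (logDeriv u) r := by
  have hu0 := hu.2.1 r hr
  have hderiv : ContDiffOn ℝ 1 (deriv u) s :=
    ((contDiffOn_succ_iff_deriv_of_isOpen (n := 1) hs).1 hu.1).2.2
  have hu₂ := hu.1.contDiffAt (hs.mem_nhds hr)
  have hu₁ := hderiv.contDiffAt (hs.mem_nhds hr)
  have hquot : deriv (logDeriv u) r + logDeriv u r ^ 2 = (u r)⁻¹ * deriv (deriv u) r := by
    rw [logDeriv, deriv_div (hu₁.differentiableAt one_ne_zero)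
      (hu₂.differentiableAt two_ne_zero) hu0.ne', Pi.div_apply]
    field_simp
    ring
  refine ⟨hu₁.div (hu₂.of_le one_le_two) hu0.ne', ?_⟩
  rw [hquot, logDeriv_apply, div_right_comm, div_eq_inv_mul, hG.map_mul _ _ (inv_pos.2 hu0),
    inv_mul_le_iff₀ hu0]
  linarith [hu.2.2 r hr]

lemma RadialElliptic.isPosSupersolution_exp (hG : RadialElliptic G l L l' L') (hs : IsOpen s)
    (hw : ∀ r ∈ s, HasDerivAt w (q r) r) (hq : ∀ r ∈ s, RiccatiAt G (μ * V r) q r) :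
    IsPosSupersolution G V μ s (fun r => exp (w r)) := by
  have hderiv : EqOn (deriv fun r => exp (w r)) (fun r => exp (w r) * q r) s :=
    fun r hr => (hw r hr).exp.deriv
  have hwC : ContDiffOn ℝ 2 w s :=
    (contDiffOn_succ_iff_deriv_of_isOpen (n := 1) hs).2
      ⟨fun r hr => (hw r hr).differentiableAt.differentiableWithinAt, by simp,
        ContDiffOn.congr (fun r hr => (hq r hr).1.contDiffWithinAt) fun r hr => (hw r hr).deriv⟩
  refine ⟨hwC.exp, fun r _ => exp_pos _, fun r hr => ?_⟩
  have hderiv₂ : deriv (deriv fun r => exp (w r)) r = exp (w r) * (deriv q r + q r ^ 2) := by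
    rw [(hderiv.eventuallyEq_of_mem (hs.mem_nhds hr)).deriv_eq,
      ((hw r hr).exp.fun_mul (hq r hr).hasDerivAt).deriv]
    ring
  rw [hderiv₂, hderiv hr, mul_div_assoc, hG.map_mul _ _ (exp_pos _)]
  linarith [mul_le_mul_of_nonneg_left (hq r hr).2 (exp_pos (w r)).le]

end Supersolution

/-! ### Gluing Riccati subsolutions -/

section Gluing

variable {G : ℝ → ℝ → ℝ} {l L l' L' : ℝ}

lemma RadialElliptic.glue_le (hG : RadialElliptic G l L l' L') {q₀ q₁ d₀ d₁ T T' M r : ℝ}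
    (h₀ : G (d₀ + q₀ ^ 2) (q₀ / r) ≤ -M) (h₁ : G (d₁ + q₁ ^ 2) (q₁ / r) ≤ -M)
    (hT₀ : 0 ≤ T) (hT₁ : T ≤ 1) (hT' : 0 ≤ T') (hq : q₁ ≤ q₀)
    (hle : 2 * (T * (1 - T)) *
      (L * |d₁ + q₁ ^ 2 - (d₀ + q₀ ^ 2)| + L' * |q₁ / r - q₀ / r|) ≤ l * (T' * (q₀ - q₁))) :
    G (d₀ + (T' * (q₁ - q₀) + T * (d₁ - d₀)) + (q₀ + T * (q₁ - q₀)) ^ 2)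
      ((q₀ + T * (q₁ - q₀)) / r) ≤ -M := by
  set a₀ := d₀ + q₀ ^ 2
  set a₁ := d₁ + q₁ ^ 2
  set e := T' * (q₀ - q₁)
  have he : 0 ≤ e := mul_nonneg hT' (sub_nonneg.2 hq)
  have hconvex : d₀ + (T' * (q₁ - q₀) + T * (d₁ - d₀)) + (q₀ + T * (q₁ - q₀)) ^ 2
      ≤ a₀ + T * (a₁ - a₀) - e := by
    have := mul_nonneg (mul_nonneg hT₀ (sub_nonneg.2 hT₁)) (sq_nonneg (q₁ - q₀))
    simp only [a₀, a₁, e]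
    linarith
  have hgain := (hG.sub_mem_left (q₀ / r + T * (q₁ / r - q₀ / r))
    (sub_le_self (a₀ + T * (a₁ - a₀)) he)).1
  rw [sub_sub_cancel] at hgain
  calc _ ≤ G (a₀ + T * (a₁ - a₀) - e) (q₀ / r + T * (q₁ / r - q₀ / r)) := by
        rw [← sub_div, mul_div, ← add_div]
        exact (hG.strictMono_left _).monotone hconvex
    _ ≤ G (a₀ + T * (a₁ - a₀)) (q₀ / r + T * (q₁ / r - q₀ / r)) - l * e := by linarith
    _ ≤ (1 - T) * G a₀ (q₀ / r) + T * G a₁ (q₁ / r) := by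
        linarith [hG.apply_convexCombo_le hT₀ hT₁ a₀ (q₀ / r) a₁ (q₁ / r)]
    _ ≤ (1 - T) * -M + T * -M := by
        have := sub_nonneg.2 hT₁
        gcongr
    _ = -M := by ring

lemma exists_pos_forall_mem_Icc_mul_lt {f g : ℝ → ℝ} {s : ℝ} {P : ℝ → Prop}
    (hP : ∀ᶠ r in nhds s, P r) (hf : ContinuousAt f s) (hg : ContinuousAt g s) (hpos : 0 < g s) :
    ∃ η > 0, ∀ r ∈ Icc s (s + η), P r ∧ η * f r < g r := by
  have hlt : ∀ᶠ x : ℝ × ℝ in nhds (s, 0), x.2 * f x.1 < g x.1 := by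
    refine ContinuousAt.eventually_lt ?_ (hg.comp_of_eq continuousAt_fst rfl) (by simpa using hpos)
    exact continuousAt_snd.mul (hf.comp_of_eq continuousAt_fst rfl)
  obtain ⟨ε, hε, hball⟩ :=
    Metric.eventually_nhds_iff.1 ((continuousAt_fst.eventually hP).and hlt)
  refine ⟨ε / 2, half_pos hε, fun r hr => hball (y := (r, ε / 2)) ?_⟩
  rw [Prod.dist_eq, max_lt_iff, dist_zero_right, norm_of_nonneg (half_pos hε).le, dist_eq,
    abs_of_nonneg (sub_nonneg.2 hr.1)]
  exact ⟨by linarith [hr.2], half_lt_self hε⟩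

lemma RiccatiAt.exists_glue_width {q₀ q₁ : ℝ → ℝ} {M₀ M₁ s : ℝ} {P : ℝ → Prop}
    (h₀ : RiccatiAt G M₀ q₀ s) (h₁ : RiccatiAt G M₁ q₁ s) (hl : 0 < l) (hs : s ≠ 0)
    (hlt : q₁ s < q₀ s) (hP : ∀ᶠ r in nhds s, P r) :
    ∃ η > 0, ∀ r ∈ Icc s (s + η), P r ∧ q₁ r < q₀ r ∧
      η * (2 * (L * |deriv q₁ r + q₁ r ^ 2 - (deriv q₀ r + q₀ r ^ 2)|
        + L' * |q₁ r / r - q₀ r / r|)) < l * (q₀ r - q₁ r) := by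
  have hc₀ := h₀.1.continuousAt
  have hc₁ := h₁.1.continuousAt
  have hradial : ContinuousAt (fun r => deriv q₁ r + q₁ r ^ 2 - (deriv q₀ r + q₀ r ^ 2)) s :=
    (h₁.continuousAt_deriv.add (hc₁.pow 2)).sub (h₀.continuousAt_deriv.add (hc₀.pow 2))
  have hangular : ContinuousAt (fun r => q₁ r / r - q₀ r / r) s :=
    (hc₁.div continuousAt_id hs).sub (hc₀.div continuousAt_id hs)
  obtain ⟨η, hη, h⟩ := exists_pos_forall_mem_Icc_mul_lt (hP.and (hc₁.eventually_lt hc₀ hlt))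
    (((hradial.abs.const_mul L).add (hangular.abs.const_mul L')).const_mul 2)
    ((hc₀.sub hc₁).const_mul l) (mul_pos hl (sub_pos.2 hlt))
  exact ⟨η, hη, fun r hr => ⟨(h r hr).1.1, (h r hr).1.2, (h r hr).2⟩⟩

lemma RadialElliptic.riccatiAt_interpolate (hG : RadialElliptic G l L l' L')
    {q₀ q₁ T : ℝ → ℝ} {M r : ℝ} (h₀ : RiccatiAt G M q₀ r) (h₁ : RiccatiAt G M q₁ r)
    (hT : ContDiffAt ℝ 1 T r) (hT₀ : 0 ≤ T r) (hT₁ : T r ≤ 1) (hT' : 0 ≤ deriv T r)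
    (hq : q₁ r ≤ q₀ r)
    (hle : 2 * (T r * (1 - T r)) * (L * |deriv q₁ r + q₁ r ^ 2 - (deriv q₀ r + q₀ r ^ 2)|
      + L' * |q₁ r / r - q₀ r / r|) ≤ l * (deriv T r * (q₀ r - q₁ r))) :
    RiccatiAt G M (fun r => q₀ r + T r * (q₁ r - q₀ r)) r := by
  refine ⟨h₀.1.add (hT.mul (h₁.1.sub h₀.1)), ?_⟩
  have hderiv : deriv (fun r => q₀ r + T r * (q₁ r - q₀ r)) r
      = deriv q₀ r + (deriv T r * (q₁ r - q₀ r) + T r * (deriv q₁ r - deriv q₀ r)) :=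
    (h₀.hasDerivAt.add ((hT.differentiableAt one_ne_zero).hasDerivAt.mul
      (h₁.hasDerivAt.sub h₀.hasDerivAt))).deriv
  rw [hderiv]
  exact hG.glue_le h₀.2 h₁.2 hT₀ hT₁ hT' hq hle

-- Switching from `q₀` to `q₁` lowers the slope by `T' (q₀ - q₁)`. Over a short interval this gain
-- dominates the convexity error, because the latter carries the factor `T (1 - T)` and the smooth
-- transition satisfies `T (1 - T) ≤ T'`.
lemma RadialElliptic.exists_glue (hG : RadialElliptic G l L l' L') {q₀ q₁ W : ℝ → ℝ}
    {a b c d s : ℝ} (h₀ : ∀ r ∈ Ioo a c, RiccatiAt G (W r) q₀ r)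
    (h₁ : ∀ r ∈ Ioo b d, RiccatiAt G (W r) q₁ r) (hs₀ : s ∈ Ioo a c) (hs₁ : s ∈ Ioo b d)
    (hs : s ≠ 0) (hlt : q₁ s < q₀ s) :
    ∃ p, (∀ r ∈ Ioo a d, RiccatiAt G (W r) p r) ∧ EqOn p q₀ (Iic s) := by
  obtain ⟨η, hη, hwidth⟩ := (h₀ s hs₀).exists_glue_width (P := (· ∈ Ioo a c ∩ Ioo b d))
    (L := L) (L' := L') (h₁ s hs₁) hG.pos hs hlt ((isOpen_Ioo.inter isOpen_Ioo).mem_nhds ⟨hs₀, hs₁⟩)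
  set T : ℝ → ℝ := fun r => smoothTransition ((r - s) / η)
  set p : ℝ → ℝ := fun r => q₀ r + T r * (q₁ r - q₀ r)
  have hp₀ : EqOn p q₀ (Iic s) := fun r hr => by
    simp only [p, T, smoothTransition.zero_of_nonpos
      (div_nonpos_of_nonpos_of_nonneg (sub_nonpos.2 hr) hη.le), zero_mul, add_zero]
  have hp₁ : EqOn p q₁ (Ioi (s + η)) := fun r hr => by
    simp only [p, T, smoothTransition.one_of_one_le
      ((one_le_div hη).2 (le_sub_iff_add_le'.2 (mem_Ioi.1 hr).le)), one_mul, add_sub_cancel]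
  refine ⟨p, fun r hr => ?_, hp₀⟩
  rcases lt_or_ge r s with hrs | hsr
  · exact (h₀ r ⟨hr.1, hrs.trans hs₀.2⟩).congr
      ((hp₀.mono Iio_subset_Iic_self).eventuallyEq_of_mem (Iio_mem_nhds hrs))
  rcases lt_or_ge (s + η) r with hηr | hrη
  · exact (h₁ r ⟨hs₁.1.trans_le hsr, hr.2⟩).congr (hp₁.eventuallyEq_of_mem (Ioi_mem_nhds hηr))
  obtain ⟨⟨hr₀, hr₁⟩, hq, hwide⟩ := hwidth r ⟨hsr, hrη⟩
  have hTmono : Monotone T := fun x y hxy => smoothTransition.monotone (by gcongr)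
  refine hG.riccatiAt_interpolate (h₀ r hr₀) (h₁ r hr₁)
    (smoothTransition.contDiffAt.comp r ((contDiffAt_id.sub contDiffAt_const).div_const η))
    (smoothTransition.nonneg _) (smoothTransition.le_one _) hTmono.deriv_nonneg hq.le ?_
  set D := L * |deriv q₁ r + q₁ r ^ 2 - (deriv q₀ r + q₀ r ^ 2)| + L' * |q₁ r / r - q₀ r / r|
  have hD : 0 ≤ D := add_nonneg (mul_nonneg hG.upper_pos.le (abs_nonneg _))
    (mul_nonneg hG.upper_nonneg (abs_nonneg _))
  calc 2 * (T r * (1 - T r)) * D = T r * (1 - T r) * (2 * D) := by ring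
    _ ≤ η * deriv T r * (2 * D) := by
        gcongr ?_ * _
        exact smoothTransition_div_mul_one_sub_le s hη r
    _ = deriv T r * (η * (2 * D)) := by ring
    _ ≤ deriv T r * (l * (q₀ r - q₁ r)) := mul_le_mul_of_nonneg_left hwide.le hTmono.deriv_nonneg
    _ = l * (deriv T r * (q₀ r - q₁ r)) := by ring

end Gluing

/-! ### The barrier for the singular potential -/

/-- The logarithmic derivative of the barrier `exp (-A r ^ (2 - γ) / (2 - γ))`, a continuous
supersolution near the origin for the potential `r ^ (-γ)`. -/
def barrier (A γ r : ℝ) : ℝ :=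
  -A * r ^ (1 - γ)

section Barrier

variable {G : ℝ → ℝ → ℝ} {q : ℝ → ℝ} {l L l' L' A γ κ ρ r : ℝ}

lemma hasDerivAt_barrier (hr : 0 < r) : HasDerivAt (barrier A γ) (A * r ^ (-γ) * (γ - 1)) r := by
  refine ((hasDerivAt_rpow_const (p := 1 - γ) (.inl hr.ne')).const_mul (-A)).congr_deriv ?_
  rw [show 1 - γ - 1 = -γ by ring]
  ring

lemma hasDerivAt_barrier_primitive (hγ : γ ≠ 2) (hr : 0 < r) :
    HasDerivAt (fun r => -A / (2 - γ) * r ^ (2 - γ)) (barrier A γ r) r := by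
  refine ((hasDerivAt_rpow_const (.inl hr.ne')).const_mul (-A / (2 - γ))).congr_deriv ?_
  have := sub_ne_zero.2 hγ.symm
  rw [barrier, show 2 - γ - 1 = 1 - γ by ring]
  field_simp

lemma barrier_div (hr : 0 < r) : barrier A γ r / r = A * r ^ (-γ) * (-1) := by
  rw [barrier, sub_eq_neg_add, rpow_add_one hr.ne']
  field_simp

lemma barrier_sq (hr : 0 < r) : barrier A γ r ^ 2 = A ^ 2 * r ^ (2 - γ) * r ^ (-γ) := by
  rw [barrier, mul_pow, neg_sq, mul_assoc, ← rpow_add hr, ← rpow_mul_natCast hr.le]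
  congr 2
  push_cast
  ring

lemma exists_barrier_sq_le (A : ℝ) (hγ : γ < 2) (hκ : 0 < κ) :
    ∃ ρ ∈ Ioo (0 : ℝ) 1, ∀ r ∈ Ioo 0 ρ, barrier A γ r ^ 2 ≤ κ * r ^ (-γ) := by
  have hcont : ContinuousAt (fun r : ℝ => A ^ 2 * r ^ (2 - γ)) 0 :=
    (continuousAt_rpow_const 0 (2 - γ) (.inr (by linarith))).const_mul _
  have hsmall : ∀ᶠ r : ℝ in nhds 0, A ^ 2 * r ^ (2 - γ) < κ :=
    hcont.eventually_lt continuousAt_const (by simpa [zero_rpow (sub_pos.2 hγ).ne'] using hκ)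
  obtain ⟨ρ, hρ, hball⟩ := Metric.eventually_nhds_iff.1 hsmall
  refine ⟨min ρ (1 / 2), ⟨by positivity, (min_le_right _ _).trans_lt one_half_lt_one⟩,
    fun r hr => ?_⟩
  rw [barrier_sq hr.1]
  have := rpow_nonneg hr.1.le (-γ)
  gcongr
  refine (hball ?_).le
  rw [dist_zero_right, norm_of_nonneg hr.1.le]
  exact hr.2.trans_le (min_le_left _ _)

namespace RadialElliptic

lemma apply_deriv_barrier (hG : RadialElliptic G l L l' L') (hA : 0 < A) (hr : 0 < r) :
    G (A * r ^ (-γ) * (γ - 1)) (barrier A γ r / r) = A * r ^ (-γ) * G (γ - 1) (-1) := by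
  rw [barrier_div hr, hG.map_mul _ _ (mul_pos hA (rpow_pos_of_pos hr _))]

lemma riccatiAt_barrier (hG : RadialElliptic G l L l' L') (hA : 0 < A) (hr : 0 < r)
    (hκ : barrier A γ r ^ 2 ≤ κ * r ^ (-γ)) :
    RiccatiAt G ((-(A * G (γ - 1) (-1)) - L * κ) * r ^ (-γ)) (barrier A γ) r := by
  refine ⟨contDiffAt_const.mul (contDiffAt_rpow_const_of_ne hr.ne'), ?_⟩
  rw [(hasDerivAt_barrier hr).deriv]
  have hshift := (hG.sub_mem_left (barrier A γ r / r)
    (le_add_of_nonneg_right (a := A * r ^ (-γ) * (γ - 1)) (sq_nonneg (barrier A γ r)))).2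
  rw [add_sub_cancel_left, hG.apply_deriv_barrier hA hr] at hshift
  linarith [mul_le_mul_of_nonneg_left hκ hG.upper_pos.le]

lemma deriv_sub_barrier_le (hG : RadialElliptic G l L l' L') (hL : L ≤ l') (hA : 0 < A)
    (hr : 0 < r) (hκ : barrier A γ r ^ 2 ≤ κ * r ^ (-γ))
    (hq : RiccatiAt G ((-(A * G (γ - 1) (-1)) + 2 * (L * κ)) * r ^ (-γ)) q r)
    (hle : barrier A γ r ≤ q r) :
    deriv q r - A * r ^ (-γ) * (γ - 1) ≤
      -((q r - barrier A γ r) / r) - (q r - barrier A γ r) ^ 2 / 2 - κ * r ^ (-γ) := by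
  set z := q r - barrier A γ r
  have hz : 0 ≤ z / r := div_nonneg (sub_nonneg.2 hle) hr.le
  have hangular : L * (z / r) ≤
      G (deriv q r + q r ^ 2) (q r / r) - G (deriv q r + q r ^ 2) (barrier A γ r / r) :=
    calc L * (z / r) ≤ l' * (z / r) := by gcongr
      _ = l' * (q r / r - barrier A γ r / r) := by rw [← sub_div]
      _ ≤ _ := (hG.sub_mem_right _ (by gcongr)).1
  have hradial : deriv q r + q r ^ 2 ≤
      A * r ^ (-γ) * (γ - 1) - (2 * (κ * r ^ (-γ)) + z / r) := by
    refine hG.le_sub_of_apply_le (b := barrier A γ r / r)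
      (by linarith [sq_nonneg (barrier A γ r)]) ?_
    rw [hG.apply_deriv_barrier hA hr]
    linarith [hq.2]
  have hsq : z ^ 2 / 2 ≤ q r ^ 2 + barrier A γ r ^ 2 := by
    linarith [sq_nonneg (q r + barrier A γ r)]
  linarith

-- If `q ≥ barrier` throughout, then `y = r (q - barrier)` is nonnegative and satisfies
-- `y' ≤ -y² / (2 r) - κ r ^ (1 - γ)`; the angular ellipticity `L ≤ l'` cancels the term `y / r`.
lemma exists_lt_barrier (hG : RadialElliptic G l L l' L') (hL : L ≤ l') (hA : 0 < A) (hγ : γ < 2)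
    (hκ : 0 < κ) (hρ : 0 < ρ) (hb : ∀ r ∈ Ioo 0 ρ, barrier A γ r ^ 2 ≤ κ * r ^ (-γ)) :
    ∃ δ ∈ Ioo 0 ρ, ∀ q : ℝ → ℝ,
      (∀ r ∈ Ioo δ ρ, RiccatiAt G ((-(A * G (γ - 1) (-1)) + 2 * (L * κ)) * r ^ (-γ)) q r) →
        ∃ s ∈ Ioo δ ρ, q s < barrier A γ s := by
  obtain ⟨δ, hδ, hcross⟩ := exists_forall_hasDerivAt_le_exists_neg hκ (sub_pos.2 hγ) hρ
  refine ⟨δ, hδ, fun q hq => ?_⟩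
  by_contra! hle
  have hpos : ∀ r ∈ Ioo δ ρ, 0 < r := fun r hr => hδ.1.trans hr.1
  obtain ⟨r, hr, hneg⟩ := hcross (fun r => r * (q r - barrier A γ r)) _
    (fun r hr => (hasDerivAt_id r).mul ((hq r hr).hasDerivAt.sub (hasDerivAt_barrier (hpos r hr))))
    fun r hr => by
      have hr₀ := hpos r hr
      have hz := hG.deriv_sub_barrier_le hL hA hr₀ (hb r ⟨hr₀, hr.2⟩) (hq r hr) (hle r hr)
      set z := q r - barrier A γ r
      calc 1 * z + r * (deriv q r - A * r ^ (-γ) * (γ - 1))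
          ≤ 1 * z + r * (-(z / r) - z ^ 2 / 2 - κ * r ^ (-γ)) := by gcongr
        _ = -((r * z) ^ 2 / (2 * r)) - κ * r ^ (2 - γ - 1) := by
            rw [show 2 - γ - 1 = -γ + 1 by ring, rpow_add_one hr₀.ne']
            field_simp
            ring
  exact hneg.not_ge (mul_nonneg (hpos r hr).le (sub_nonneg.2 (hle r hr)))

end RadialElliptic

end Barrier

/-! ### Admissible values near the origin and a priori bounds -/

/-- The set of `μ` admitting a supersolution on the punctured unit interval which extends
continuously and positively to the origin. -/
def continuousAdmissible (G : ℝ → ℝ → ℝ) (V : ℝ → ℝ) : Set ℝ :=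
  {μ | ∃ u, ContinuousOn u (Ico 0 1) ∧ (∀ r ∈ Ico 0 1, 0 < u r) ∧
    IsPosSupersolution G V μ (Ioo 0 1) u}

section Admissible

variable {G : ℝ → ℝ → ℝ} {V V' q : ℝ → ℝ} {l L l' L' a b m A κ M r γ μ μ' : ℝ}

lemma continuousAdmissible_subset : continuousAdmissible G V ⊆ admissible G V (Ioo 0 1) :=
  fun _ ⟨u, _, _, hu⟩ => ⟨u, hu⟩

lemma RadialElliptic.zero_mem_continuousAdmissible (hG : RadialElliptic G l L l' L') :
    0 ∈ continuousAdmissible G V :=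
  ⟨1, continuousOn_const, fun _ _ => one_pos, hG.isPosSupersolution_one⟩

lemma mem_continuousAdmissible_of_potential_le (hμ : μ ∈ continuousAdmissible G V)
    (hV : ∀ r ∈ Ioo 0 1, μ' * V' r ≤ μ * V r) : μ' ∈ continuousAdmissible G V' :=
  let ⟨u, hu, hu₀, hsuper⟩ := hμ
  ⟨u, hu, hu₀, hsuper.of_potential_le hV⟩

lemma RadialElliptic.mem_continuousAdmissible_of_barrier (hG : RadialElliptic G l L l' L')
    (hL : L ≤ l') (hγ : γ < 2) (hA : 0 < A) (hκ : 0 < κ)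
    (hμ : ∀ δ ∈ Ioo (0 : ℝ) 1,
      -(A * G (γ - 1) (-1)) + 2 * (L * κ) ∈ admissible G (· ^ (-γ)) (Ioo δ 1)) :
    -(A * G (γ - 1) (-1)) - L * κ ∈ continuousAdmissible G (· ^ (-γ)) := by
  have hLκ := mul_pos hG.upper_pos hκ
  obtain ⟨ρ, hρ, hb⟩ := exists_barrier_sq_le A hγ hκ
  obtain ⟨δ, hδ, hcross⟩ := hG.exists_lt_barrier hL hA hγ hκ hρ.1 hb
  obtain ⟨u, hu⟩ := hμ δ ⟨hδ.1, hδ.2.trans hρ.2⟩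
  have hq := fun r hr => hG.riccatiAt_logDeriv (r := r) isOpen_Ioo hu hr
  obtain ⟨s, hs, hqs⟩ := hcross (logDeriv u) fun r hr => hq r ⟨hr.1, hr.2.trans hρ.2⟩
  have hs₀ := hδ.1.trans hs.1
  have hs₁ := hs.2.trans hρ.2
  obtain ⟨p, hp, hpb⟩ := hG.exists_glue
    (fun r hr => hG.riccatiAt_barrier hA hr.1 (hb r hr))
    (fun r hr => (hq r hr).of_le (mul_le_mul_of_nonneg_right (by linarith)
      (rpow_nonneg (hδ.1.trans hr.1).le _))) ⟨hs₀, hs.2⟩ ⟨hs.1, hs₁⟩ hs₀.ne' hqs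
  obtain ⟨w, hwc, hw⟩ := exists_hasDerivAt_of_eqOn_Iic ⟨hs₀, hs₁⟩
    (HasDerivAt.continuousOn fun r hr => (hp r hr).hasDerivAt)
    (HasDerivAt.continuousOn fun r hr => hasDerivAt_barrier hr.1) hpb
    ((continuous_rpow_const (sub_pos.2 hγ).le).const_mul _).continuousOn
    (fun r hr => hasDerivAt_barrier_primitive hγ.ne hr.1)
  exact ⟨_, hwc.rexp, fun _ _ => exp_pos _, hG.isPosSupersolution_exp isOpen_Ioo hw hp⟩

lemma RadialElliptic.mem_continuousAdmissible_of_lt (hG : RadialElliptic G l L l' L') (hL : L ≤ l')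
    (hγ : γ < 2) (hμ₀ : 0 ≤ μ') (hlt : μ' < μ)
    (hμ : ∀ δ ∈ Ioo (0 : ℝ) 1, μ ∈ admissible G (· ^ (-γ)) (Ioo δ 1)) :
    μ' ∈ continuousAdmissible G (· ^ (-γ)) := by
  have hL₀ := hG.upper_pos
  have hc := neg_pos.2 (hG.apply_sub_one_neg_one_neg hL hγ)
  -- `A` and `κ` solve `μ' = A c - L κ` and `μ = A c + 2 L κ` with `c = -G (γ - 1) (-1)`.
  obtain ⟨κ, hκ, hκμ⟩ : ∃ κ, 0 < κ ∧ L * κ = (μ - μ') / 3 :=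
    ⟨(μ - μ') / 3 / L, div_pos (by linarith) hL₀, mul_div_cancel₀ _ hL₀.ne'⟩
  obtain ⟨A, hA, hAμ⟩ : ∃ A, 0 < A ∧ A * -G (γ - 1) (-1) = μ' + L * κ :=
    ⟨(μ' + L * κ) / -G (γ - 1) (-1), div_pos (by positivity) hc, div_mul_cancel₀ _ hc.ne'⟩
  convert hG.mem_continuousAdmissible_of_barrier hL hγ hA hκ fun δ hδ => ?_ using 1
  · linarith
  · convert hμ δ hδ using 1
    linarith

lemma RadialElliptic.deriv_le_of_riccatiAt (hG : RadialElliptic G l L l' L')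
    (hq : RiccatiAt G M q r) (hM : 0 ≤ M) (hr : 0 < r) :
    deriv q r ≤ -(q r ^ 2 / 2) + (L' / (l * r)) ^ 2 / 2 - M / L := by
  have hl := hG.pos
  have hL := hG.upper_pos
  have hL' := hG.upper_nonneg
  set B := L' / (l * r)
  have hnonneg : 0 ≤ G (B * |q r|) (q r / r) := by
    have hradial := (hG.sub_mem_left 0 (by positivity : 0 ≤ B * |q r|)).1
    have hangular := hG.le_add_abs (B * |q r|) 0 (B * |q r|) (q r / r)
    rw [sub_self, abs_zero, zero_sub, abs_neg, abs_div, abs_of_pos hr] at hangular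
    have hcancel : l * (B * |q r| - 0) = L' * (|q r| / r) := by
      simp only [B]
      field_simp
      ring
    linarith [hG.map_zero]
  have hsum : deriv q r + q r ^ 2 ≤ B * |q r| - M / L := by
    refine hG.le_sub_of_apply_le (b := q r / r) (by positivity) ?_
    rw [mul_div_cancel₀ _ hL.ne']
    linarith [hq.2]
  linarith [sq_nonneg (B - |q r|), sq_abs (q r)]

lemma RadialElliptic.bddAbove_admissible (hG : RadialElliptic G l L l' L') (ha : 0 < a)
    (hab : a < b) (hm : 0 < m) (hV : ∀ r ∈ Ioo a b, m ≤ V r) :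
    BddAbove (admissible G V (Ioo a b)) := by
  have hl := hG.pos
  have hL := hG.upper_pos
  have hL' := hG.upper_nonneg
  set h := (b - a) / 4
  have hh : 0 < h := div_pos (sub_pos.2 hab) four_pos
  set K := ((L' / (l * a)) ^ 2 + (4 / h) ^ 2) / 2 * L / m
  refine ⟨K, fun μ ⟨u, hu⟩ => le_of_not_gt fun hμ => ?_⟩
  have hμ₀ : 0 < μ := hμ.trans_le' (by positivity)
  have hsub : Icc (a + h) (b - h) ⊆ Ioo a b := fun r hr => ⟨by linarith [hr.1], by linarith [hr.2]⟩
  have hRiccati : ∀ r ∈ Icc (a + h) (b - h), RiccatiAt G (μ * m) (logDeriv u) r := fun r hr =>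
    (hG.riccatiAt_logDeriv isOpen_Ioo hu (hsub hr)).of_le
      (mul_le_mul_of_nonneg_left (hV r (hsub hr)) hμ₀.le)
  have hlength : b - h - (a + h) = 2 * h := by ring
  have hlt := mul_sub_lt_two_pi_of_hasDerivAt_le (k := 4 / h) (by positivity) (by linarith)
    (fun r hr => (hRiccati r hr).hasDerivAt) fun r hr => by
      have hr₀ : a ≤ r := (hsub hr).1.le
      have hdecay := hG.deriv_le_of_riccatiAt (hRiccati r hr) (by positivity) (ha.trans_le hr₀)
      have hangular : (L' / (l * r)) ^ 2 ≤ (L' / (l * a)) ^ 2 := by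
        have := ha.trans_le hr₀
        gcongr
      have hlarge : ((L' / (l * a)) ^ 2 + (4 / h) ^ 2) / 2 ≤ μ * m / L := by
        rw [le_div_iff₀ hL]
        exact ((div_lt_iff₀ hm).1 hμ).le
      linarith
  rw [hlength, show 4 / h * (2 * h) = 8 by field_simp; norm_num] at hlt
  linarith [pi_lt_four]

end Admissible

/-! ### Principal eigenvalues -/

/-- The principal eigenvalue on the annulus `δ < r < 1` for the potential `r ^ (-γ)`; for `δ = 0`
this is the punctured ball. -/
def annulusEV (G : ℝ → ℝ → ℝ) (γ δ : ℝ) : ℝ :=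
  sSup (admissible G (· ^ (-γ)) (Ioo δ 1))

/-- The principal eigenvalue of the whole ball, for a potential `V` without singularity. -/
def ballEV (G : ℝ → ℝ → ℝ) (V : ℝ → ℝ) : ℝ :=
  sSup (continuousAdmissible G V)

/-- The regularization of the potential `r ^ (-γ)` at scale `ε`. -/
def regPotential (γ ε r : ℝ) : ℝ :=
  (r ^ 2 + ε ^ 2) ^ (-(γ / 2))

section Potential

variable {γ δ ε r : ℝ}

lemma rpow_neg_eq_sq_rpow (hr : 0 ≤ r) : r ^ (-γ) = (r ^ 2) ^ (-(γ / 2)) := by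
  rw [← rpow_natCast_mul hr]
  congr 1
  push_cast
  ring

lemma regPotential_le (hγ : 0 ≤ γ) (hr : 0 < r) : regPotential γ ε r ≤ r ^ (-γ) := by
  rw [rpow_neg_eq_sq_rpow hr.le]
  exact rpow_le_rpow_of_nonpos (by positivity) (le_add_of_nonneg_right (sq_nonneg ε))
    (by linarith)

lemma mul_rpow_neg_le_regPotential (hγ : 0 ≤ γ) (hδ : 0 < δ) (hr : δ ≤ r) :
    (1 + (ε / δ) ^ 2) ^ (-(γ / 2)) * r ^ (-γ) ≤ regPotential γ ε r := by
  have hr₀ := hδ.trans_le hr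
  rw [rpow_neg_eq_sq_rpow hr₀.le, ← mul_rpow (by positivity) (by positivity)]
  refine rpow_le_rpow_of_nonpos (by positivity) ?_ (by linarith)
  calc r ^ 2 + ε ^ 2 = r ^ 2 + (ε / δ) ^ 2 * δ ^ 2 := by field_simp
    _ ≤ r ^ 2 + (ε / δ) ^ 2 * r ^ 2 := by gcongr
    _ = (1 + (ε / δ) ^ 2) * r ^ 2 := by ring

end Potential

namespace RadialElliptic

variable {G : ℝ → ℝ → ℝ} {l L l' L' γ b δ ε : ℝ}

lemma bddAbove_admissible_rpow_neg (hG : RadialElliptic G l L l' L') (hγ : 0 ≤ γ) (hδ : δ < 1) :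
    BddAbove (admissible G (· ^ (-γ)) (Ioo δ 1)) := by
  refine (hG.bddAbove_admissible (a := max δ (1 / 2)) (by positivity)
    (max_lt hδ one_half_lt_one) one_pos fun r hr => ?_).mono
      (admissible_subset_of_subset (Ioo_subset_Ioo_left (le_max_left _ _)))
  have hr₀ : 0 < r := one_half_pos.trans ((le_max_right _ _).trans_lt hr.1)
  exact one_le_rpow_of_pos_of_le_one_of_nonpos hr₀ hr.2.le (neg_nonpos.2 hγ)

lemma annulusEV_nonneg (hG : RadialElliptic G l L l' L') (hγ : 0 ≤ γ) (hδ : δ < 1) :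
    0 ≤ annulusEV G γ δ :=
  le_csSup (hG.bddAbove_admissible_rpow_neg hγ hδ) hG.zero_mem_admissible

lemma monotoneOn_annulusEV (hG : RadialElliptic G l L l' L') (hγ : 0 ≤ γ) :
    MonotoneOn (annulusEV G γ) (Iio 1) := fun _ _ _ hδ hle =>
  csSup_le_csSup (hG.bddAbove_admissible_rpow_neg hγ hδ) ⟨0, hG.zero_mem_admissible⟩
    (admissible_subset_of_subset (Ioo_subset_Ioo_left hle))

lemma exists_annulusEV_lt (hG : RadialElliptic G l L l' L') (hL : L ≤ l') (hγ₀ : 0 ≤ γ)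
    (hγ₂ : γ < 2) (hb : annulusEV G γ 0 < b) : ∃ δ ∈ Ioo 0 1, annulusEV G γ δ < b := by
  by_contra! hge
  obtain ⟨μ', hμ', hμ'b⟩ := exists_between hb
  obtain ⟨μ, hμ'μ, hμb⟩ := exists_between hμ'b
  have hμ'₀ := (hG.annulusEV_nonneg hγ₀ one_pos).trans hμ'.le
  refine hμ'.not_ge (le_csSup (hG.bddAbove_admissible_rpow_neg hγ₀ one_pos)
    (continuousAdmissible_subset (hG.mem_continuousAdmissible_of_lt hL hγ₂ hμ'₀ hμ'μ
      fun δ hδ => ?_)))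
  obtain ⟨ν, hν, hμν⟩ := exists_lt_of_lt_csSup ⟨0, hG.zero_mem_admissible⟩
    (hμb.trans_le (hge δ hδ))
  exact mem_admissible_of_le (fun r hr => rpow_nonneg (hδ.1.trans hr.1).le _) hν hμν.le

lemma bddAbove_continuousAdmissible_regPotential (hG : RadialElliptic G l L l' L') (hγ : 0 ≤ γ) :
    BddAbove (continuousAdmissible G (regPotential γ ε)) := by
  refine (hG.bddAbove_admissible (a := 1 / 2) one_half_pos one_half_lt_one
    (m := (1 + ε ^ 2) ^ (-(γ / 2))) (by positivity) fun r hr => ?_).mono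
      (continuousAdmissible_subset.trans
        (admissible_subset_of_subset (Ioo_subset_Ioo_left one_half_pos.le)))
  have hr₀ : 0 < r := one_half_pos.trans hr.1
  refine rpow_le_rpow_of_nonpos (by positivity) ?_ (by linarith)
  gcongr
  exact pow_le_one₀ hr₀.le hr.2.le

lemma annulusEV_zero_le_ballEV (hG : RadialElliptic G l L l' L') (hL : L ≤ l') (hγ₀ : 0 ≤ γ)
    (hγ₂ : γ < 2) (ε : ℝ) : annulusEV G γ 0 ≤ ballEV G (regPotential γ ε) := by
  have hbdd := hG.bddAbove_continuousAdmissible_regPotential (ε := ε) hγ₀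
  refine le_of_forall_lt_imp_le_of_dense fun μ' hμ' => ?_
  rcases le_total μ' 0 with hneg | hpos
  · exact hneg.trans (le_csSup hbdd hG.zero_mem_continuousAdmissible)
  obtain ⟨μ, hμ, hμ'μ⟩ := exists_lt_of_lt_csSup ⟨0, hG.zero_mem_admissible⟩ hμ'
  have hmem := hG.mem_continuousAdmissible_of_lt hL hγ₂ hpos hμ'μ fun δ hδ =>
    admissible_subset_of_subset (Ioo_subset_Ioo_left hδ.1.le) hμ
  exact le_csSup hbdd (mem_continuousAdmissible_of_potential_le hmem fun r hr =>
    mul_le_mul_of_nonneg_left (regPotential_le hγ₀ hr.1) hpos)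

lemma ballEV_le_mul_annulusEV (hG : RadialElliptic G l L l' L') (hγ : 0 ≤ γ) (hδ : δ ∈ Ioo 0 1)
    (ε : ℝ) :
    ballEV G (regPotential γ ε) ≤ (1 + (ε / δ) ^ 2) ^ (γ / 2) * annulusEV G γ δ := by
  refine csSup_le ⟨0, hG.zero_mem_continuousAdmissible⟩ fun μ hμ => ?_
  rcases le_total μ 0 with hneg | hpos
  · exact hneg.trans (mul_nonneg (by positivity) (hG.annulusEV_nonneg hγ hδ.2))
  have hmem : (1 + (ε / δ) ^ 2) ^ (-(γ / 2)) * μ ∈ admissible G (· ^ (-γ)) (Ioo δ 1) := by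
    obtain ⟨u, hu⟩ := continuousAdmissible_subset hμ
    refine ⟨u, (hu.mono (Ioo_subset_Ioo_left hδ.1.le)).of_potential_le fun r hr => ?_⟩
    calc _ = μ * ((1 + (ε / δ) ^ 2) ^ (-(γ / 2)) * r ^ (-γ)) := by ring
      _ ≤ μ * regPotential γ ε r :=
        mul_le_mul_of_nonneg_left (mul_rpow_neg_le_regPotential hγ hδ.1 hr.1.le) hpos
  have hle := le_csSup (hG.bddAbove_admissible_rpow_neg hγ hδ.2) hmem
  rwa [rpow_neg (by positivity), inv_mul_le_iff₀ (by positivity)] at hle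

lemma tendsto_annulusEV (hG : RadialElliptic G l L l' L') (hL : L ≤ l') (hγ₀ : 0 ≤ γ)
    (hγ₂ : γ < 2) :
    Tendsto (annulusEV G γ) (nhdsWithin 0 (Ioo 0 1)) (nhds (annulusEV G γ 0)) := by
  have hmono := hG.monotoneOn_annulusEV hγ₀
  refine tendsto_order.2 ⟨fun b hb => ?_, fun b hb => ?_⟩
  · filter_upwards [self_mem_nhdsWithin] with δ hδ
    exact hb.trans_le (hmono (mem_Iio.2 one_pos) hδ.2 hδ.1.le)
  · obtain ⟨δ₀, hδ₀, hlt⟩ := hG.exists_annulusEV_lt hL hγ₀ hγ₂ hb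
    filter_upwards [self_mem_nhdsWithin, mem_nhdsWithin_of_mem_nhds (Iio_mem_nhds hδ₀.1)]
      with δ hδ hδδ₀
    exact (hmono hδ.2 hδ₀.2 hδδ₀.le).trans_lt hlt

lemma tendsto_ballEV_regPotential (hG : RadialElliptic G l L l' L') (hL : L ≤ l') (hγ₀ : 0 ≤ γ)
    (hγ₂ : γ < 2) :
    Tendsto (fun ε => ballEV G (regPotential γ ε)) (nhds 0) (nhds (annulusEV G γ 0)) := by
  refine tendsto_order.2 ⟨fun b hb => .of_forall fun ε =>
    hb.trans_le (hG.annulusEV_zero_le_ballEV hL hγ₀ hγ₂ ε), fun b hb => ?_⟩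
  obtain ⟨δ, hδ, hlt⟩ := hG.exists_annulusEV_lt hL hγ₀ hγ₂ hb
  have hcont : ContinuousAt (fun ε : ℝ => (1 + (ε / δ) ^ 2) ^ (γ / 2) * annulusEV G γ δ) 0 :=
    (ContinuousAt.rpow_const (by fun_prop) (.inr (by linarith))).mul continuousAt_const
  filter_upwards [hcont.eventually_lt continuousAt_const (by simpa using hlt)] with ε hε
  exact (hG.ballEV_le_mul_annulusEV hγ₀ hδ ε).trans_lt hε

end RadialElliptic

/-! ### Fully nonlinear operators on radial functions -/

/-- The operator induced by `F` on radial functions: the Hessian of a radial `u` has the eigenvalues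
`a = u''` (once) and `b = u' / r` (`N - 1` times). -/
def radialOp (N : ℕ) (F : Matrix (Fin N) (Fin N) ℝ → ℝ) (a b : ℝ) : ℝ :=
  F (Dmat N a b)

section RadialOp

variable {N : ℕ} {F : Matrix (Fin N) (Fin N) ℝ → ℝ} {lam Lam : ℝ}

lemma Dmat_add (a b x y : ℝ) : Dmat N (a + x) (b + y) = Dmat N a b + Dmat N x y := by
  simp only [Dmat, diagonal_add, ite_add_ite]

lemma Dmat_mul (t a b : ℝ) : Dmat N (t * a) (t * b) = t • Dmat N a b := by
  simp only [Dmat, ← diagonal_smul, Pi.smul_def, smul_eq_mul, mul_ite]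

lemma trace_Dmat (hN : N ≠ 0) (a b : ℝ) : (Dmat N a b).trace = a + (N - 1) * b := by
  obtain ⟨k, rfl⟩ := Nat.exists_eq_succ_of_ne_zero hN
  simp [Dmat, Fin.sum_univ_succ]

lemma posSemidef_Dmat {a b : ℝ} (ha : 0 ≤ a) (hb : 0 ≤ b) : (Dmat N a b).PosSemidef :=
  .diagonal fun i => by
    simp only [Pi.zero_apply]
    split_ifs <;> assumption

lemma UnifElliptic.radialOp_sub_mem (hF : UnifElliptic N lam Lam F) (hN : N ≠ 0) (a b : ℝ) {x y : ℝ}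
    (hx : 0 ≤ x) (hy : 0 ≤ y) :
    radialOp N F (a + x) (b + y) - radialOp N F a b ∈
      Icc (lam * (x + (N - 1) * y)) (Lam * (x + (N - 1) * y)) := by
  rw [radialOp, Dmat_add, ← trace_Dmat hN]
  exact hF _ _ (isSymm_diagonal _) (posSemidef_Dmat hx hy)

lemma UnifElliptic.radialElliptic (hF : UnifElliptic N lam Lam F) (hFhom : PosHomog N F)
    (hN : N ≠ 0) (hlam : 0 < lam) :
    RadialElliptic (radialOp N F) lam Lam (lam * (N - 1)) (Lam * (N - 1)) where
  pos := hlam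
  nonneg := mul_nonneg hlam.le (sub_nonneg.2 (Nat.one_le_cast.2 (Nat.one_le_iff_ne_zero.2 hN)))
  sub_mem_left {a a'} b h := by
    simpa using hF.radialOp_sub_mem hN a b (sub_nonneg.2 h) le_rfl
  sub_mem_right a {b b'} h := by
    simpa [mul_assoc] using hF.radialOp_sub_mem hN a b le_rfl (sub_nonneg.2 h)
  map_mul a b ht := by
    rw [radialOp, Dmat_mul, hFhom _ ht, radialOp]

end RadialOp

lemma radialEV_eq_annulusEV (N : ℕ) (F : Matrix (Fin N) (Fin N) ℝ → ℝ) (γ : ℝ) :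
    radialEV N F γ = annulusEV (radialOp N F) γ 0 :=
  rfl

lemma deltaEV_eq_annulusEV (N : ℕ) (F : Matrix (Fin N) (Fin N) ℝ → ℝ) (γ δ : ℝ) :
    deltaEV N F γ δ = annulusEV (radialOp N F) γ δ :=
  rfl

lemma epsEV_eq_ballEV (N : ℕ) (F : Matrix (Fin N) (Fin N) ℝ → ℝ) (γ ε : ℝ) :
    epsEV N F γ ε = ballEV (radialOp N F) (regPotential γ ε) := by
  refine congrArg sSup (Set.ext fun μ => exists_congr fun u => ?_)
  constructor
  · rintro ⟨hcont, hsmooth, hpos, hle⟩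
    exact ⟨hcont, hpos, hsmooth, fun r hr => hpos r (Ioo_subset_Ico_self hr), hle⟩
  · rintro ⟨hcont, hpos, hsmooth, -, hle⟩
    exact ⟨hcont, hsmooth, hpos, hle⟩

theorem stmt1_general (N : ℕ) (lam Lam : ℝ) (hlam : 0 < lam) (hlL : lam ≤ Lam)
    (hNp : 2 ≤ lam / Lam * ((N : ℝ) - 1) + 1) (F : Matrix (Fin N) (Fin N) ℝ → ℝ)
    (hF : UnifElliptic N lam Lam F) (hFhom : PosHomog N F) (γ : ℝ) (hγ₀ : 0 ≤ γ) (hγ₂ : γ < 2) :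
    Tendsto (fun ε => epsEV N F γ ε) (nhdsWithin 0 (Ioi 0)) (nhds (radialEV N F γ)) ∧
    Tendsto (fun δ => deltaEV N F γ δ) (nhdsWithin 0 (Ioo 0 1)) (nhds (radialEV N F γ)) := by
  have hLam : 0 < Lam := hlam.trans_le hlL
  have hL : Lam ≤ lam * ((N : ℝ) - 1) := by
    rw [← one_le_div hLam, mul_div_right_comm]
    linarith
  have hN : N ≠ 0 := by
    rintro rfl
    push_cast at hL
    linarith
  have hG := hF.radialElliptic hFhom hN hlam
  simp only [epsEV_eq_ballEV, deltaEV_eq_annulusEV, radialEV_eq_annulusEV]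
  exact ⟨(hG.tendsto_ballEV_regPotential hL hγ₀ hγ₂).mono_left nhdsWithin_le_nhds,
    hG.tendsto_annulusEV hL hγ₀ hγ₂⟩

theorem stmt1 (N : ℕ) (hN : 2 ≤ N) (lam Lam : ℝ) (hlam : 0 < lam) (hlL : lam ≤ Lam)
    (hNp : 2 < lam / Lam * ((N : ℝ) - 1) + 1)
    (F : Matrix (Fin N) (Fin N) ℝ → ℝ)
    (hF1 : UnifElliptic N lam Lam F) (hF2 : RotInvariant N F) (hF3 : PosHomog N F)
    (γ : ℝ) (hγ0 : 0 < γ) (hγ2 : γ < 2) :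
    Tendsto (fun ε => epsEV N F γ ε) (nhdsWithin 0 (Ioi 0)) (nhds (radialEV N F γ)) ∧
    Tendsto (fun δ => deltaEV N F γ δ) (nhdsWithin 0 (Ioo 0 1)) (nhds (radialEV N F γ)) :=
  stmt1_general N lam Lam hlam hlL hNp.le F hF1 hF3 γ hγ0.le hγ2

end
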